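/- The inclusion ℤ → ℚ is not pure as a morphism of ℤ-modules; nevertheless, for every ℚ-vector space M and every ℚ-linear map ρ : M → M ⊗_ℤ ℚ satisfying coassociativity Σ ρ(m_0) ⊗ m_1 = Σ m_0 ⊗ 1 ⊗ m_1 and the counit condition Σ m_0·m_1 = m, one has M^co = M and the counit map ζ_M : M^co ⊗_ℤ ℚ → M, m ⊗ q ↦ m·q, is bijective. -/

import Mathlib

open TensorProduct

universe u

noncomputable def unitMap (B A : Type u) [CommRing B] [CommRing A] [Algebra B A]
    (N : Type u) [AddCommGroup N] [Module B N] : N →ₗ[B] N ⊗[B] A :=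
  (TensorProduct.mk B N A).flip 1

/-- The action map `M ⊗_B A → M`, `m ⊗ a ↦ m · a`. -/
noncomputable def actionMap (B A : Type u) [CommRing B] [CommRing A] [Algebra B A]
    (M : Type u) [AddCommGroup M] [Module B M] [Module A M] [IsScalarTower B A M] :
    M ⊗[B] A →ₗ[B] M :=
  TensorProduct.lift (LinearMap.mk₂ B (fun m a => a • m)
    (fun m m' a => smul_add a m m')
    (fun b m a => smul_comm a b m)
    (fun m a a' => add_smul a a' m)
    (fun b m a => smul_assoc b a m))

/-- `(M, ρ)` is a comodule over the canonical coring `A ⊗_B A`. -/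
def IsCanComodule (B A : Type u) [CommRing B] [CommRing A] [Algebra B A]
    (M : Type u) [AddCommGroup M] [Module B M] [Module A M] [IsScalarTower B A M]
    (ρ : M →ₗ[B] M ⊗[B] A) : Prop :=
  (∀ (a : A) (m : M),
      ρ (a • m) = LinearMap.lTensor M (LinearMap.mulLeft B a) (ρ m)) ∧
  (∀ m : M, LinearMap.rTensor A ρ (ρ m) = LinearMap.rTensor A (unitMap B A M) (ρ m)) ∧
  (∀ m : M, actionMap B A M (ρ m) = m)

/-- The coinvariants `M^co = {m : ρ m = m ⊗ 1}` as a `B`-submodule. -/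
noncomputable def coinv (B A : Type u) [CommRing B] [CommRing A] [Algebra B A]
    (M : Type u) [AddCommGroup M] [Module B M] [Module A M] [IsScalarTower B A M]
    (ρ : M →ₗ[B] M ⊗[B] A) : Submodule B M where
  carrier := {m | ρ m = m ⊗ₜ[B] 1}
  add_mem' := by
    intro x y hx hy
    simp only [Set.mem_setOf_eq] at *
    rw [map_add, hx, hy, add_tmul]
  zero_mem' := by simp
  smul_mem' := by
    intro b m hm
    simp only [Set.mem_setOf_eq] at *
    rw [map_smul, hm, smul_tmul']

/-- The counit map `ζ_M : M^co ⊗_B A → M`, `m ⊗ a ↦ m · a`. -/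
noncomputable def counitMap (B A : Type u) [CommRing B] [CommRing A] [Algebra B A]
    (M : Type u) [AddCommGroup M] [Module B M] [Module A M] [IsScalarTower B A M]
    (ρ : M →ₗ[B] M ⊗[B] A) : (coinv B A M ρ) ⊗[B] A →ₗ[B] M :=
  actionMap B A M ∘ₗ LinearMap.rTensor A (coinv B A M ρ).subtype

theorem rat_tmul_eq (M : Type) [AddCommGroup M] [Module ℚ M] (m : M) (q : ℚ) :
    m ⊗ₜ[ℤ] q = (q • m) ⊗ₜ[ℤ] (1 : ℚ) := by
  have hd : (q.den : ℚ) ≠ 0 := by exact_mod_cast q.den_nz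
  have h1 : m = (q.den : ℤ) • ((q.den : ℚ)⁻¹ • m) := by
    rw [← Int.cast_smul_eq_zsmul ℚ, smul_smul]
    simp [hd]
  have h2 : (q.den : ℤ) • q = q.num • (1 : ℚ) := by
    simp [Rat.den_mul_eq_num]
  have h3 : q • m = q.num • ((q.den : ℚ)⁻¹ • m) := by
    rw [← Int.cast_smul_eq_zsmul ℚ, smul_smul, ← div_eq_mul_inv, Rat.num_div_den]
  rw [h3]
  conv_lhs => rw [h1]
  rw [smul_tmul, h2, ← smul_tmul]

theorem tensor_eq_action (M : Type) [AddCommGroup M] [Module ℚ M] (x : M ⊗[ℤ] ℚ) :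
    x = (actionMap ℤ ℚ M x) ⊗ₜ[ℤ] (1 : ℚ) := by
  induction x with
  | zero => simp
  | tmul m q => exact rat_tmul_eq M m q
  | add x y hx hy => rw [map_add, add_tmul, ← hx, ← hy]

/-- The inclusion `ℤ → ℚ` is not pure as a morphism of `ℤ`-modules; nevertheless, for
every `ℚ`-vector space `M` with a coassociative counital coaction
`ρ : M → M ⊗_ℤ ℚ`, the coinvariants are all of `M` and the counit map
`ζ_M : M^co ⊗_ℤ ℚ → M` is bijective. -/
theorem int_rat_not_pure_but_descent :
    (¬ ∀ (N : Type) [AddCommGroup N] [Module ℤ N],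
        Function.Injective (unitMap ℤ ℚ N)) ∧
    (∀ (M : Type) [AddCommGroup M] [Module ℚ M] (ρ : M →ₗ[ℤ] M ⊗[ℤ] ℚ),
        IsCanComodule ℤ ℚ M ρ →
        (coinv ℤ ℚ M ρ = ⊤ ∧ Function.Bijective (counitMap ℤ ℚ M ρ))) := by
  refine ⟨fun h => ?_, fun M _ _ ρ hρ => ?_⟩
  · have h0 : unitMap ℤ ℚ (ZMod 2) 1 = unitMap ℤ ℚ (ZMod 2) 0 := by
      rw [map_zero]
      change (1 : ZMod 2) ⊗ₜ[ℤ] (1 : ℚ) = 0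
      have h2 : (1 : ℚ) = (2 : ℤ) • (1 / 2 : ℚ) := by norm_num
      have h3 : (2 : ℤ) • (1 : ZMod 2) = 0 := by decide
      rw [h2, ← smul_tmul, h3, zero_tmul]
    exact absurd (h (ZMod 2) h0) (by decide)
  · obtain ⟨-, -, hc⟩ := hρ
    have hmem : ∀ m : M, m ∈ coinv ℤ ℚ M ρ := by
      intro m
      change ρ m = m ⊗ₜ[ℤ] 1
      exact (tensor_eq_action M (ρ m)).trans (congrArg (fun z : M => z ⊗ₜ[ℤ] (1 : ℚ)) (hc m))
    have htop : coinv ℤ ℚ M ρ = ⊤ := by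
      rw [eq_top_iff]
      exact fun m _ => hmem m
    refine ⟨htop, ?_, ?_⟩
    · have hinj : Function.Injective (LinearMap.rTensor ℚ (coinv ℤ ℚ M ρ).subtype) :=
        Module.Flat.rTensor_preserves_injective_linearMap _ (Submodule.subtype_injective _)
      have hact : Function.Injective (actionMap ℤ ℚ M) := by
        intro x y hxy
        rw [tensor_eq_action M x, hxy, ← tensor_eq_action M y]
      exact hact.comp hinj
    · intro m
      refine ⟨(⟨m, hmem m⟩ : coinv ℤ ℚ M ρ) ⊗ₜ[ℤ] (1 : ℚ), ?_⟩
      change (1 : ℚ) • m = m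
      exact one_smul _ _
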